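/- Let Γ be a directed graph that is strongly connected, let G be a group, and let w be a map assigning to each edge of Γ an element of G. For a walk in the symmetrization of Γ (in which each edge e may be traversed forwards, contributing w(e), or backwards, contributing w(e)^{−1}), define its weight as the ordered product of the contributions of its steps. Then for every vertex v of Γ and every closed walk γ in the symmetrization of Γ based at v, the weight of γ belongs to the subgroup of G generated by the weights of the directed closed walks of Γ based at v. -/

import Mathlib

/-- `IsDirWalk src tgt u v es`: the list of edges `es` is a directed walk from `u` to `v`. -/
def IsDirWalk {V E : Type} (src tgt : E → V) : V → V → List E → Prop
  | u, v, [] => u = v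
  | u, v, e :: es => src e = u ∧ IsDirWalk src tgt (tgt e) v es

/-- A walk in the symmetrization: each step is an edge traversed forwards (`true`)
or backwards (`false`). -/
def IsSymWalk {V E : Type} (src tgt : E → V) : V → V → List (E × Bool) → Prop
  | u, v, [] => u = v
  | u, v, p :: ps =>
      (if p.2 then src p.1 else tgt p.1) = u ∧
      IsSymWalk src tgt (if p.2 then tgt p.1 else src p.1) v ps

/-- The weight of a directed walk: the ordered product `g_n ⋯ g_1` of the edge weights. -/
def dirWeight {E G : Type} [Group G] (w : E → G) : List E → G
  | [] => 1
  | e :: es => dirWeight w es * w e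

/-- The weight of a walk in the symmetrization: a forward step contributes `w e`,
a backward step contributes `(w e)⁻¹`; the weight is the ordered product `g_n ⋯ g_1`. -/
def symWeight {E G : Type} [Group G] (w : E → G) : List (E × Bool) → G
  | [] => 1
  | p :: ps => symWeight w ps * (if p.2 then w p.1 else (w p.1)⁻¹)

/-!
For `φ u` the weight of a directed walk from `u` to the base point `v`, replacing each `w e` by
`φ (tgt e) * w e * (φ (src e))⁻¹` conjugates the weight of every closed walk at `v` by `φ v`. The
walks `src e → tgt e → v` and `src e → v` can be completed by the same directed walk `v → src e`,
so the new weight of `e` is a quotient of weights of two directed closed walks at `v`. Hence after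
this gauge change every step, forwards or backwards, contributes an element of the subgroup they
generate, and `φ v` lies in this subgroup too.
-/

section Walks

variable {V E G : Type} [Group G] {src tgt : E → V} {w : E → G} {u v : V}

theorem IsDirWalk.append {x : V} {as bs : List E} (has : IsDirWalk src tgt u v as)
    (hbs : IsDirWalk src tgt v x bs) : IsDirWalk src tgt u x (as ++ bs) := by
  induction as generalizing u with
  | nil => exact (show u = v from has) ▸ hbs
  | cons e es ih => exact ⟨has.1, ih has.2⟩

theorem dirWeight_append (w : E → G) (as bs : List E) :
    dirWeight w (as ++ bs) = dirWeight w bs * dirWeight w as := by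
  induction as with
  | nil => exact (mul_one _).symm
  | cons e es ih => simp only [List.cons_append, dirWeight, ih, mul_assoc]

/-- The subgroup generated by the weights of the directed closed walks based at `v`: the directed
holonomy group at `v`, in which the theorem places the weights of all closed walks. -/
def dirHolonomy (src tgt : E → V) (w : E → G) (v : V) : Subgroup G :=
  Subgroup.closure {g : G | ∃ es : List E, IsDirWalk src tgt v v es ∧ dirWeight w es = g}

theorem IsDirWalk.dirWeight_mem_dirHolonomy {es : List E} (h : IsDirWalk src tgt v v es) :
    dirWeight w es ∈ dirHolonomy src tgt w v :=
  Subgroup.subset_closure ⟨es, h, rfl⟩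

theorem IsDirWalk.dirWeight_mul_inv_mem_dirHolonomy {as bs cs : List E}
    (has : IsDirWalk src tgt u v as) (hbs : IsDirWalk src tgt u v bs)
    (hcs : IsDirWalk src tgt v u cs) :
    dirWeight w as * (dirWeight w bs)⁻¹ ∈ dirHolonomy src tgt w v := by
  have hca : dirWeight w as * dirWeight w cs ∈ dirHolonomy src tgt w v :=
    dirWeight_append w cs as ▸ (hcs.append has).dirWeight_mem_dirHolonomy
  have hcb : dirWeight w bs * dirWeight w cs ∈ dirHolonomy src tgt w v :=
    dirWeight_append w cs bs ▸ (hcs.append hbs).dirWeight_mem_dirHolonomy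
  simpa only [← div_eq_mul_inv, mul_div_mul_right_eq_div] using div_mem hca hcb

theorem IsSymWalk.gauge_symWeight_mem {H : Subgroup G} {φ : V → G}
    (hφ : ∀ e, φ (tgt e) * w e * (φ (src e))⁻¹ ∈ H) {ps : List (E × Bool)}
    (hps : IsSymWalk src tgt u v ps) : φ v * symWeight w ps * (φ u)⁻¹ ∈ H := by
  induction ps generalizing u with
  | nil =>
    obtain rfl : u = v := hps
    simp [symWeight]
  | cons p ps ih =>
    obtain ⟨e, forward⟩ := p
    obtain ⟨rfl, htail⟩ := hps
    cases forward with
    | true => simpa [symWeight, mul_assoc] using mul_mem (ih htail) (hφ e)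
    | false => simpa [symWeight, mul_assoc] using mul_mem (ih htail) (inv_mem (hφ e))

end Walks

/-- For a strongly connected directed graph with group-valued edge weights, the weight of
any closed walk in the symmetrization based at `v` lies in the subgroup generated by the
weights of the directed closed walks based at `v`. -/
theorem stmt11 {V E G : Type} [Group G] (src tgt : E → V) (w : E → G)
    (hsc : ∀ u v : V, ∃ es : List E, IsDirWalk src tgt u v es)
    (v : V) (ps : List (E × Bool)) (hps : IsSymWalk src tgt v v ps) :
    symWeight w ps ∈ Subgroup.closure
      {g : G | ∃ es : List E, IsDirWalk src tgt v v es ∧ dirWeight w es = g} := by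
  choose walk hwalk using fun u => hsc u v
  let φ : V → G := fun u => dirWeight w (walk u)
  have hφ : ∀ e, φ (tgt e) * w e * (φ (src e))⁻¹ ∈ dirHolonomy src tgt w v := fun e =>
    have ⟨_, hreturn⟩ := hsc v (src e)
    have hedge : IsDirWalk src tgt (src e) v (e :: walk (tgt e)) := ⟨rfl, hwalk (tgt e)⟩
    hedge.dirWeight_mul_inv_mem_dirHolonomy (hwalk (src e)) hreturn
  have hφv : φ v ∈ dirHolonomy src tgt w v := (hwalk v).dirWeight_mem_dirHolonomy
  have hgauge : φ v * symWeight w ps * (φ v)⁻¹ ∈ dirHolonomy src tgt w v :=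
    hps.gauge_symWeight_mem hφ
  rwa [Subgroup.mul_mem_cancel_right _ (inv_mem hφv),
    Subgroup.mul_mem_cancel_left _ hφv] at hgauge
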